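/- arXiv:1303.4172 — 2 statements merged into one kernel-verified Lean document; each statement's English description precedes it below -/
import Mathlib

section
/- For every fixed γ ∈ (0,1): lim_{ν → 0⁺} Υ_ν(γ) = γ. -/
open Real Finset

noncomputable section

/-- The property that `C` is a valid curvature constant at level `z`:
`C ≥ 1` and `C⁻¹ ≤ eˣ / ℓ⁽ⁱ⁾(x) ≤ C` for all `x ≤ z` and `i ∈ {0,1,2}`. -/
def CBound (ℓ : ℝ → ℝ) (z C : ℝ) : Prop :=
  1 ≤ C ∧ ∀ x ≤ z, ∀ i ≤ 2,
    C⁻¹ ≤ Real.exp x / iteratedDeriv i ℓ x ∧ Real.exp x / iteratedDeriv i ℓ x ≤ C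

/-- `C_ℓ(z)`: the least valid curvature constant at level `z`. -/
def Cconst (ℓ : ℝ → ℝ) (z : ℝ) : ℝ := sInf {C : ℝ | CBound ℓ z C}

/-- Membership in the class `𝕃`: positive, twice continuously differentiable,
strictly convex, and `C_ℓ(z) < ∞` (i.e. some valid constant exists) for every `z`. -/
def MemL (ℓ : ℝ → ℝ) : Prop :=
  (∀ x, 0 < ℓ x) ∧ ContDiff ℝ 2 ℓ ∧ StrictConvexOn ℝ Set.univ ℓ ∧
    ∀ z : ℝ, ∃ C : ℝ, CBound ℓ z C

/-- Membership in `𝕃_∞`: in `𝕃` and moreover `C_ℓ(z) → 1` as `z → −∞`. -/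
def MemLinf (ℓ : ℝ → ℝ) : Prop :=
  MemL ℓ ∧ Filter.Tendsto (Cconst ℓ) Filter.atBot (nhds 1)

variable {m n : ℕ}

/-- The empirical risk `L(Aλ) = (1/m) Σᵢ ℓ((Aλ)ᵢ)`. -/
def LL (ℓ : ℝ → ℝ) (A : Matrix (Fin m) (Fin n) ℝ) (lam : Fin n → ℝ) : ℝ :=
  (∑ i, ℓ (A.mulVec lam i)) / m

/-- The gradient vector `∇L(Aλ)`, with `i`-th entry `ℓ'((Aλ)ᵢ)/m`. -/
def gradL (ℓ : ℝ → ℝ) (A : Matrix (Fin m) (Fin n) ℝ) (lam : Fin n → ℝ) : Fin m → ℝ :=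
  fun i => deriv ℓ (A.mulVec lam i) / m

/-- `‖Aᵀ ∇L(Aλ)‖_∞`. -/
def gInf (ℓ : ℝ → ℝ) (A : Matrix (Fin m) (Fin n) ℝ) (lam : Fin n → ℝ) : ℝ :=
  ⨆ j : Fin n, |∑ i, gradL ℓ A lam i * A i j|

/-- `‖∇L(Aλ)‖₁`. -/
def gOne (ℓ : ℝ → ℝ) (A : Matrix (Fin m) (Fin n) ℝ) (lam : Fin n → ℝ) : ℝ :=
  ∑ i, |gradL ℓ A lam i|

/-- `γ̂ = ‖Aᵀ∇L(Aλ)‖_∞ / ‖∇L(Aλ)‖₁`. -/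
def gammaHat (ℓ : ℝ → ℝ) (A : Matrix (Fin m) (Fin n) ℝ) (lam : Fin n → ℝ) : ℝ :=
  gInf ℓ A lam / gOne ℓ A lam

/-- `C = C_ℓ(ℓ⁻¹(m · L(Aλ)))`. -/
def Cstep (ℓ : ℝ → ℝ) (A : Matrix (Fin m) (Fin n) ℝ) (lam : Fin n → ℝ) : ℝ :=
  Cconst ℓ (Function.invFun ℓ ((m : ℝ) * LL ℓ A lam))

/-- The (minimum `l¹`) margin `M(Aλ) = min_k (−(Aλ)_k) / ‖λ‖₁`. -/
def margin (A : Matrix (Fin m) (Fin n) ℝ) (lam : Fin n → ℝ) : ℝ :=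
  ⨅ k : Fin m, (-(A.mulVec lam k)) / (∑ j, |lam j|)

/-- The maximum margin `γ = max_{‖λ‖₁=1} min_i (−(Aλ)ᵢ)`. -/
def gammaMax (A : Matrix (Fin m) (Fin n) ℝ) : ℝ :=
  sSup {r : ℝ | ∃ lam : Fin n → ℝ, (∑ j, |lam j|) = 1 ∧ r = ⨅ i : Fin m, -(A.mulVec lam i)}

/-- Boosting iterates: `λ₀ = 0`, `λ_t = λ_{t-1} + α_t • v_t` where `v_t` is a signed
standard basis vector satisfying `∇L(Aλ_{t-1})ᵀ A v_t = −‖Aᵀ∇L(Aλ_{t-1})‖_∞`. -/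
def IsBoostSeq (ℓ : ℝ → ℝ) (A : Matrix (Fin m) (Fin n) ℝ)
    (lam : ℕ → Fin n → ℝ) (α : ℕ → ℝ) (v : ℕ → Fin n → ℝ) : Prop :=
  lam 0 = 0 ∧
  (∀ t : ℕ, 1 ≤ t → lam t = lam (t-1) + α t • v t) ∧
  (∀ t : ℕ, 1 ≤ t → ∃ s : ℝ, (s = 1 ∨ s = -1) ∧ ∃ j : Fin n, v t = s • (Pi.single j (1:ℝ) : Fin n → ℝ)) ∧
  (∀ t : ℕ, 1 ≤ t →
    ∑ i, gradL ℓ A (lam (t-1)) i * A.mulVec (v t) i = - gInf ℓ A (lam (t-1)))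

/-- The quantity `Υ_ν(γ)`. -/
def Upsilon (ν γ : ℝ) : ℝ :=
  ((2/ν) * Real.log 2 - (2/ν) * Real.log ((1+γ) ^ (1-ν) + (1-γ) ^ (1-ν))
      - Real.log (1-γ^2)) /
    (Real.log (1+γ) - Real.log (1-γ))

open Filter Topology

/-!
Up to the factor two, the `ν`-dependent part of the numerator of `Υ_ν(γ)` is a difference quotient
at `s = 1` of the log-partition function `s ↦ ln ((1+γ)ˢ + (1-γ)ˢ)`. Hence it converges to
`(1+γ) ln (1+γ) + (1-γ) ln (1-γ)`. Subtracting `ln (1-γ²) = ln (1+γ) + ln (1-γ)` leaves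
`γ (ln (1+γ) - ln (1-γ))`, which is `γ` times the denominator.
-/

section LogSumRpow

variable {ι : Type*} {s : Finset ι} {a : ι → ℝ}

theorem hasDerivAt_log_sum_rpow (hs : s.Nonempty) (ha : ∀ i ∈ s, 0 < a i) (x : ℝ) :
    HasDerivAt (fun y : ℝ => log (∑ i ∈ s, a i ^ y))
      ((∑ i ∈ s, a i ^ x * log (a i)) / ∑ i ∈ s, a i ^ x) x := by
  have hpos : 0 < ∑ i ∈ s, a i ^ x := sum_pos (fun i hi => rpow_pos_of_pos (ha i hi) x) hs
  have hsum : HasDerivAt (fun y : ℝ => ∑ i ∈ s, a i ^ y) (∑ i ∈ s, a i ^ x * log (a i)) x :=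
    HasDerivAt.fun_sum fun i hi => (hasStrictDerivAt_const_rpow (ha i hi) x).hasDerivAt
  exact hsum.log hpos.ne'

theorem tendsto_log_sum_sub_log_sum_rpow_div (hs : s.Nonempty) (ha : ∀ i ∈ s, 0 < a i) :
    Tendsto (fun ν : ℝ => (log (∑ i ∈ s, a i) - log (∑ i ∈ s, a i ^ (1 - ν))) / ν) (𝓝[≠] 0)
      (𝓝 ((∑ i ∈ s, a i * log (a i)) / ∑ i ∈ s, a i)) := by
  have hderiv : HasDerivAt (fun ν : ℝ => -log (∑ i ∈ s, a i ^ (1 - ν)))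
      ((∑ i ∈ s, a i * log (a i)) / ∑ i ∈ s, a i) 0 := by
    have h := hasDerivAt_log_sum_rpow hs ha (1 - 0)
    simpa only [sub_zero, rpow_one, neg_neg] using (h.comp_const_sub 1 0).fun_neg
  refine (hasDerivAt_iff_tendsto_slope.mp hderiv).congr fun ν => ?_
  simp only [slope_def_field, sub_zero, rpow_one]
  ring

end LogSumRpow

theorem tendsto_log_two_sub_log_rpow_add_rpow_div {γ : ℝ} (hγ : γ ∈ Set.Ioo (-1 : ℝ) 1) :
    Tendsto (fun ν : ℝ => (log 2 - log ((1 + γ) ^ (1 - ν) + (1 - γ) ^ (1 - ν))) / ν) (𝓝[≠] 0)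
      (𝓝 (((1 + γ) * log (1 + γ) + (1 - γ) * log (1 - γ)) / 2)) := by
  have hpos : ∀ i ∈ univ, 0 < ![1 + γ, 1 - γ] i := by
    simpa [Fin.forall_fin_two, neg_lt_iff_pos_add'] using hγ
  have hsum : 1 + γ + (1 - γ) = 2 := by ring
  simpa [Fin.sum_univ_two, hsum] using tendsto_log_sum_sub_log_sum_rpow_div univ_nonempty hpos

theorem log_one_sub_sq {x : ℝ} (hx : 1 + x ≠ 0) (hx' : 1 - x ≠ 0) :
    log (1 - x ^ 2) = log (1 + x) + log (1 - x) := by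
  rw [← log_mul hx hx']
  ring_nf

theorem log_one_add_sub_log_one_sub_ne_zero {x : ℝ} (hx : x ∈ Set.Ioo (-1 : ℝ) 1) (hx₀ : x ≠ 0) :
    log (1 + x) - log (1 - x) ≠ 0 := by
  intro h
  have heq : 1 + x = 1 - x :=
    log_injOn_pos (neg_lt_iff_pos_add'.mp hx.1) (sub_pos.mpr hx.2) (sub_eq_zero.mp h)
  exact hx₀ (by linarith)

theorem upsilon_tendsto_general {γ : ℝ} (hγ : γ ∈ Set.Ioo (-1 : ℝ) 1) (hγ₀ : γ ≠ 0) :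
    Tendsto (fun ν => Upsilon ν γ) (𝓝[≠] 0) (𝓝 γ) := by
  have hden : log (1 + γ) - log (1 - γ) ≠ 0 := log_one_add_sub_log_one_sub_ne_zero hγ hγ₀
  have hsq : log (1 - γ ^ 2) = log (1 + γ) + log (1 - γ) :=
    log_one_sub_sq (neg_lt_iff_pos_add'.mp hγ.1).ne' (sub_pos.mpr hγ.2).ne'
  have hlim := (((tendsto_log_two_sub_log_rpow_add_rpow_div hγ).const_mul 2).sub_const
    (log (1 - γ ^ 2))).div_const (log (1 + γ) - log (1 - γ))
  have hval : (2 * (((1 + γ) * log (1 + γ) + (1 - γ) * log (1 - γ)) / 2) - log (1 - γ ^ 2)) /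
      (log (1 + γ) - log (1 - γ)) = γ := by
    rw [hsq, div_eq_iff hden]
    ring
  rw [hval] at hlim
  refine hlim.congr fun ν => ?_
  rw [Upsilon]
  ring

/-- `Υ_ν(γ) → γ` as `ν → 0⁺`, for fixed `γ ∈ (0,1)`. -/
theorem upsilon_tendsto (γ : ℝ) (hγ : γ ∈ Set.Ioo (0:ℝ) 1) :
    Filter.Tendsto (fun ν => Upsilon ν γ) (nhdsWithin 0 (Set.Ioi 0)) (nhds γ) := by
  have hγ' : γ ∈ Set.Ioo (-1 : ℝ) 1 := ⟨neg_one_lt_zero.trans hγ.1, hγ.2⟩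
  exact (upsilon_tendsto_general hγ' hγ.1.ne').mono_left (nhdsGT_le_nhdsNE 0)
end
end

section
/- Let A ∈ {−1,+1}^{m×n} be a binary matrix, let ℓ ∈ 𝕃, let λ ∈ ℝⁿ, let v = s·e_j (s ∈ {±1}) satisfy ∇L(Aλ)ᵀAv = −‖Aᵀ∇L(Aλ)‖_∞, set γ̂ := ‖Aᵀ∇L(Aλ)‖_∞/‖∇L(Aλ)‖₁ (assume γ̂ < 1) and C := C_ℓ(ℓ⁻¹(m·L(Aλ))). If α* is a minimizer of α ↦ L(A(λ + α·v)), then (1/2)·ln((1+γ̂)/(1−γ̂)) − (1/2)·ln(C⁴) ≤ α* ≤ (1/2)·ln((1+γ̂)/(1−γ̂)) + (1/2)·ln(C⁴). Consequently, for any ν ∈ (0,1], |ν·α* − (ν/2)·ln((1+γ̂)/(1−γ̂))| ≤ (ν/2)·ln(C⁴). -/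
open Real Finset

noncomputable section

variable {m n : ℕ}

/-!
Split the examples by the sign of `(Av)ᵢ = ±1` and let `P`, `N` be the gradient mass of the two
classes at `λ`, so that `N / P = (1 + γ̂) / (1 - γ̂)`. All margins at `λ` and at `λ + α*v` lie below
the level `ℓ⁻¹(m L(Aλ))`, where `ℓ'` agrees with `exp` up to a factor `C`; hence a step of length
`α` multiplies `P` by `e^α` and `N` by `e^(-α)`, each up to a factor `C²`. Stationarity at `α*` says
that the two classes then carry equal mass, so `e^(2α*)` agrees with `N / P` up to a factor `C⁴`.
-/

theorem tendsto_atTop_of_convexOn_of_deriv_pos {f : ℝ → ℝ} (hf : ConvexOn ℝ Set.univ f) {a : ℝ}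
    (ha : 0 < deriv f a) : Filter.Tendsto f Filter.atTop Filter.atTop := by
  have tangent_le : ∀ᶠ x in Filter.atTop, f a + deriv f a * (x - a) ≤ f x := by
    filter_upwards [Filter.eventually_gt_atTop a] with x hax
    have hslope := hf.deriv_le_slope (Set.mem_univ a) (Set.mem_univ x) hax
      (differentiableAt_of_deriv_ne_zero ha.ne')
    rw [slope_def_field, le_div_iff₀ (sub_pos.2 hax)] at hslope
    linarith
  refine Filter.tendsto_atTop_mono' _ tangent_le (Filter.tendsto_atTop_add_const_left _ _ ?_)
  exact (Filter.tendsto_atTop_add_const_right _ (-a) Filter.tendsto_id).const_mul_atTop ha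

theorem abs_sub_half_log_div_le {P N K α : ℝ} (hPN : 0 < P + N) (hK : 0 < K)
    (hP : P ≤ (K * exp (-α)) ^ 2 * N) (hN : N ≤ (K * exp α) ^ 2 * P) :
    |α - 1 / 2 * log (N / P)| ≤ log K := by
  have hP₀ : 0 < P := by
    by_contra! hP_nonpos
    linarith [mul_nonpos_of_nonneg_of_nonpos (sq_nonneg (K * exp α)) hP_nonpos]
  have hN₀ : 0 < N := pos_of_mul_pos_right (hP₀.trans_le hP) (sq_nonneg _)
  have hlogP := log_le_log hP₀ hP
  have hlogN := log_le_log hN₀ hN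
  rw [log_mul (by positivity) (by positivity), log_pow, log_mul hK.ne' (exp_pos _).ne', log_exp]
    at hlogP hlogN
  rw [log_div hN₀.ne' hP₀.ne', abs_le]
  push_cast at hlogP hlogN
  constructor <;> linarith

section SignedTilt

variable {ι : Type*} [Fintype ι] {b p q : ι → ℝ} {α K : ℝ}

theorem sum_one_add_mul_le_of_tilt (hb : ∀ i, b i = 1 ∨ b i = -1)
    (h : ∀ i, q i ≤ K * exp (α * b i) * p i) :
    ∑ i, (1 + b i) * q i ≤ K * exp α * ∑ i, (1 + b i) * p i := by
  rw [mul_sum]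
  refine sum_le_sum fun i _ => ?_
  have hi := h i
  rcases hb i with hbi | hbi <;> rw [hbi] at hi ⊢
  · rw [mul_one] at hi
    linarith
  · simp

theorem sum_one_add_mul_le_sum_one_sub_mul (hb : ∀ i, b i = 1 ∨ b i = -1) (hK : 0 ≤ K)
    (hqp : ∀ i, q i ≤ K * exp (α * b i) * p i)
    (hpq : ∀ i, p i ≤ K * exp (-(α * b i)) * q i) (hq : ∑ i, q i * b i = 0) :
    ∑ i, (1 + b i) * p i ≤ (K * exp (-α)) ^ 2 * ∑ i, (1 - b i) * p i := by
  have hplus : ∑ i, (1 + b i) * p i ≤ K * exp (-α) * ∑ i, (1 + b i) * q i :=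
    sum_one_add_mul_le_of_tilt hb fun i => by simpa only [neg_mul] using hpq i
  have hminus : ∑ i, (1 - b i) * q i ≤ K * exp (-α) * ∑ i, (1 - b i) * p i :=
    sum_one_add_mul_le_of_tilt (b := fun i => -b i)
      (fun i => (hb i).symm.imp neg_eq_iff_eq_neg.2 neg_inj.2)
      fun i => by simpa only [neg_mul_neg] using hqp i
  have hbalance : ∑ i, (1 + b i) * q i = ∑ i, (1 - b i) * q i := by
    rw [← sub_eq_zero, ← sum_sub_distrib, ← mul_zero 2, ← hq, mul_sum]
    exact sum_congr rfl fun i _ => by ring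
  calc ∑ i, (1 + b i) * p i ≤ K * exp (-α) * ∑ i, (1 - b i) * q i := hbalance ▸ hplus
    _ ≤ K * exp (-α) * (K * exp (-α) * ∑ i, (1 - b i) * p i) := by gcongr
    _ = (K * exp (-α)) ^ 2 * ∑ i, (1 - b i) * p i := by ring

theorem abs_sub_half_log_le_of_tilt (hb : ∀ i, b i = 1 ∨ b i = -1) (hK : 0 < K)
    (hqp : ∀ i, q i ≤ K * exp (α * b i) * p i)
    (hpq : ∀ i, p i ≤ K * exp (-(α * b i)) * q i) (hq : ∑ i, q i * b i = 0)
    (hp : 0 < ∑ i, p i) :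
    |α - 1 / 2 * log ((1 + -(∑ i, p i * b i) / ∑ i, p i) / (1 - -(∑ i, p i * b i) / ∑ i, p i))| ≤
      log K := by
  have hplus : ∑ i, (1 + b i) * p i = ∑ i, p i + ∑ i, p i * b i := by
    rw [← sum_add_distrib]
    exact sum_congr rfl fun i _ => by ring
  have hminus : ∑ i, (1 - b i) * p i = ∑ i, p i - ∑ i, p i * b i := by
    rw [← sum_sub_distrib]
    exact sum_congr rfl fun i _ => by ring
  have hodds : (1 + -(∑ i, p i * b i) / ∑ i, p i) / (1 - -(∑ i, p i * b i) / ∑ i, p i) =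
      (∑ i, (1 - b i) * p i) / ∑ i, (1 + b i) * p i := by
    rw [hplus, hminus, one_add_div hp.ne', one_sub_div hp.ne', div_div_div_cancel_right₀ hp.ne',
      sub_neg_eq_add, ← sub_eq_add_neg]
  rw [hodds]
  refine abs_sub_half_log_div_le (by linarith) hK
    (sum_one_add_mul_le_sum_one_sub_mul hb hK.le hqp hpq hq) ?_
  -- Reversing the direction of the step exchanges the two classes.
  have hreversed := sum_one_add_mul_le_sum_one_sub_mul (b := fun i => -b i) (α := -α)
    (fun i => (hb i).symm.imp neg_eq_iff_eq_neg.2 neg_inj.2) hK.le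
    (fun i => by simpa only [neg_mul_neg] using hqp i)
    (fun i => by simpa only [neg_mul_neg] using hpq i) (by simp [hq])
  simpa only [neg_neg, sub_neg_eq_add, ← sub_eq_add_neg] using hreversed

end SignedTilt

namespace CBound

variable {ℓ : ℝ → ℝ} {x y z C : ℝ} {i : ℕ}

theorem pos (h : CBound ℓ z C) : 0 < C := zero_lt_one.trans_le h.1

theorem exp_div_iteratedDeriv_pos (h : CBound ℓ z C) (hx : x ≤ z) (hi : i ≤ 2) :
    0 < exp x / iteratedDeriv i ℓ x :=
  (inv_pos.2 h.pos).trans_le (h.2 x hx i hi).1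

theorem iteratedDeriv_pos (h : CBound ℓ z C) (hx : x ≤ z) (hi : i ≤ 2) :
    0 < iteratedDeriv i ℓ x :=
  (div_pos_iff_of_pos_left (exp_pos x)).1 (h.exp_div_iteratedDeriv_pos hx hi)

theorem iteratedDeriv_le (h : CBound ℓ z C) (hx : x ≤ z) (hi : i ≤ 2) :
    iteratedDeriv i ℓ x ≤ C * exp x := by
  have hle := (h.2 x hx i hi).1
  rwa [le_div_iff₀ (h.iteratedDeriv_pos hx hi), inv_mul_le_iff₀ h.pos] at hle

theorem exp_le (h : CBound ℓ z C) (hx : x ≤ z) (hi : i ≤ 2) :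
    exp x ≤ C * iteratedDeriv i ℓ x :=
  (div_le_iff₀ (h.iteratedDeriv_pos hx hi)).1 (h.2 x hx i hi).2

theorem iteratedDeriv_le_exp_sub_mul (h : CBound ℓ z C) (hx : x ≤ z) (hy : y ≤ z) (hi : i ≤ 2) :
    iteratedDeriv i ℓ y ≤ C ^ 2 * exp (y - x) * iteratedDeriv i ℓ x := by
  have hC := h.pos
  calc iteratedDeriv i ℓ y ≤ C * exp y := h.iteratedDeriv_le hy hi
    _ = C * exp (y - x) * exp x := by rw [mul_assoc, ← exp_add, sub_add_cancel]
    _ ≤ C * exp (y - x) * (C * iteratedDeriv i ℓ x) := by gcongr; exact h.exp_le hx hi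
    _ = C ^ 2 * exp (y - x) * iteratedDeriv i ℓ x := by ring

theorem Cconst_of_exists (h : ∃ C, CBound ℓ z C) : CBound ℓ z (Cconst ℓ z) := by
  refine ⟨le_csInf h fun C hC => hC.1, fun x hx i hi =>
    ⟨?_, le_csInf h fun C hC => (hC.2 x hx i hi).2⟩⟩
  obtain ⟨C₀, hC₀⟩ := h
  refine inv_le_of_inv_le₀ (hC₀.exp_div_iteratedDeriv_pos hx hi) (le_csInf ⟨C₀, hC₀⟩ fun C hC => ?_)
  exact inv_le_of_inv_le₀ hC.pos (hC.2 x hx i hi).1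

end CBound

/-- Finiteness of `C_ℓ(z)` for every `z`. Since the derivatives of a function that is not
differentiable take the junk value `0`, this clause of `MemL` forces `ℓ` to be twice differentiable
with `ℓ, ℓ', ℓ'' > 0`. -/
def ExpComparable (ℓ : ℝ → ℝ) : Prop := ∀ z : ℝ, ∃ C : ℝ, CBound ℓ z C

namespace ExpComparable

variable {ℓ : ℝ → ℝ} {x y : ℝ} {i : ℕ}

theorem iteratedDeriv_pos (h : ExpComparable ℓ) (hi : i ≤ 2) (x : ℝ) : 0 < iteratedDeriv i ℓ x :=
  (CBound.Cconst_of_exists (h x)).iteratedDeriv_pos le_rfl hi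

theorem pos (h : ExpComparable ℓ) (x : ℝ) : 0 < ℓ x := by
  simpa only [iteratedDeriv_zero] using h.iteratedDeriv_pos zero_le_two x

theorem deriv_pos (h : ExpComparable ℓ) (x : ℝ) : 0 < deriv ℓ x := by
  simpa only [iteratedDeriv_one] using h.iteratedDeriv_pos one_le_two x

theorem differentiable (h : ExpComparable ℓ) : Differentiable ℝ ℓ :=
  fun x => differentiableAt_of_deriv_ne_zero (h.deriv_pos x).ne'

theorem convexOn (h : ExpComparable ℓ) : ConvexOn ℝ Set.univ ℓ :=
  (strictConvexOn_univ_of_deriv2_pos h.differentiable.continuous fun x => by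
    simpa only [iteratedDeriv_eq_iterate] using h.iteratedDeriv_pos le_rfl x).convexOn

theorem tendsto_atBot (h : ExpComparable ℓ) : Filter.Tendsto ℓ Filter.atBot (nhds 0) := by
  obtain ⟨C, hC⟩ := h 0
  have exp_bound : Filter.Tendsto (fun x => C * exp x) Filter.atBot (nhds 0) := by
    simpa only [mul_zero] using tendsto_exp_atBot.const_mul C
  refine squeeze_zero' (.of_forall fun x => (h.pos x).le) ?_ exp_bound
  filter_upwards [Filter.eventually_le_atBot 0] with x hx
  simpa only [iteratedDeriv_zero] using hC.iteratedDeriv_le hx zero_le_two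

theorem Ioi_subset_range (h : ExpComparable ℓ) : Set.Ioi 0 ⊆ Set.range ℓ := by
  rw [← Set.image_univ]
  exact isPreconnected_univ.intermediate_value_Ioi (by simp) (by simp)
    h.differentiable.continuous.continuousOn h.tendsto_atBot
    (tendsto_atTop_of_convexOn_of_deriv_pos h.convexOn (h.deriv_pos 0))

theorem le_invFun (h : ExpComparable ℓ) (hxy : ℓ x ≤ y) : x ≤ Function.invFun ℓ y := by
  rwa [← (strictMono_of_deriv_pos h.deriv_pos).le_iff_le,
    Function.invFun_eq (h.Ioi_subset_range ((h.pos x).trans_le hxy))]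

end ExpComparable

section Risk

variable {ℓ : ℝ → ℝ} {A : Matrix (Fin m) (Fin n) ℝ} {lam μ μ' v : Fin n → ℝ} {α : ℝ} {i : Fin m}

/-- The edge `-∇L(Aλ)ᵀAv / ‖∇L(Aλ)‖₁` of an arbitrary direction `v` at `λ`; it equals `γ̂` for the
coordinate directions selected by boosting. -/
def edge (ℓ : ℝ → ℝ) (A : Matrix (Fin m) (Fin n) ℝ) (lam v : Fin n → ℝ) : ℝ :=
  -(∑ i, gradL ℓ A lam i * A.mulVec v i) / gOne ℓ A lam

theorem edge_eq_gammaHat (hv : ∑ i, gradL ℓ A lam i * A.mulVec v i = -gInf ℓ A lam) :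
    edge ℓ A lam v = gammaHat ℓ A lam := by
  rw [edge, hv, neg_neg, gammaHat]

theorem mulVec_smul_single_eq_one_or_neg_one {s : ℝ} {j : Fin n}
    (hA : ∀ i, A i j = 1 ∨ A i j = -1) (hs : s = 1 ∨ s = -1) (i : Fin m) :
    A.mulVec (s • Pi.single j (1 : ℝ)) i = 1 ∨ A.mulVec (s • Pi.single j (1 : ℝ)) i = -1 := by
  have hcol : A.mulVec (s • Pi.single j (1 : ℝ)) i = s * A i j := by simp [Matrix.mulVec_smul]
  rw [hcol]
  rcases hs with rfl | rfl <;> rcases hA i with hij | hij <;> simp [hij]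

theorem mulVec_add_smul_apply :
    A.mulVec (lam + α • v) i = A.mulVec lam i + α * A.mulVec v i := by
  simp [Matrix.mulVec_add, Matrix.mulVec_smul]

theorem gradL_pos (hℓ : ExpComparable ℓ) (i : Fin m) : 0 < gradL ℓ A lam i :=
  div_pos (hℓ.deriv_pos _) (Nat.cast_pos.2 i.pos)

theorem gOne_eq_sum (hℓ : ExpComparable ℓ) : gOne ℓ A lam = ∑ i, gradL ℓ A lam i :=
  sum_congr rfl fun i _ => abs_of_pos (gradL_pos hℓ i)

theorem hasDerivAt_LL_add_smul (hℓ : Differentiable ℝ ℓ) :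
    HasDerivAt (fun β : ℝ => LL ℓ A (lam + β • v))
      (∑ i, gradL ℓ A (lam + α • v) i * A.mulVec v i) α := by
  have hmargin (i : Fin m) :
      HasDerivAt (fun β : ℝ => A.mulVec (lam + β • v) i) (A.mulVec v i) α := by
    simp only [mulVec_add_smul_apply]
    simpa only [one_mul, id_eq] using
      ((hasDerivAt_id α).mul_const (A.mulVec v i)).const_add (A.mulVec lam i)
  have hgrad : ∑ i, gradL ℓ A (lam + α • v) i * A.mulVec v i =
      (∑ i, deriv ℓ (A.mulVec (lam + α • v) i) * A.mulVec v i) / m := by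
    rw [sum_div]
    exact sum_congr rfl fun i _ => div_mul_eq_mul_div _ _ _
  rw [hgrad]
  exact (HasDerivAt.fun_sum fun i _ => (hℓ _).hasDerivAt.comp α (hmargin i)).div_const _

theorem sum_gradL_mul_eq_zero_of_forall_LL_le (hℓ : Differentiable ℝ ℓ)
    (hmin : ∀ β : ℝ, LL ℓ A (lam + α • v) ≤ LL ℓ A (lam + β • v)) :
    ∑ i, gradL ℓ A (lam + α • v) i * A.mulVec v i = 0 :=
  IsLocalMin.hasDerivAt_eq_zero (.of_forall hmin) (hasDerivAt_LL_add_smul hℓ)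

theorem mulVec_le_invFun_of_LL_le (hℓ : ExpComparable ℓ) (h : LL ℓ A μ ≤ LL ℓ A lam)
    (i : Fin m) : A.mulVec μ i ≤ Function.invFun ℓ (m * LL ℓ A lam) := by
  have hm : (0 : ℝ) < m := Nat.cast_pos.2 i.pos
  refine hℓ.le_invFun ?_
  calc ℓ (A.mulVec μ i) ≤ ∑ k, ℓ (A.mulVec μ k) :=
        single_le_sum (f := fun k => ℓ (A.mulVec μ k)) (fun k _ => (hℓ.pos _).le) (mem_univ i)
    _ = m * LL ℓ A μ := (mul_div_cancel₀ _ hm.ne').symm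
    _ ≤ m * LL ℓ A lam := by gcongr

theorem gradL_le_exp_sub_mul_gradL (hℓ : ExpComparable ℓ) (hμ : LL ℓ A μ ≤ LL ℓ A lam)
    (hμ' : LL ℓ A μ' ≤ LL ℓ A lam) (i : Fin m) :
    gradL ℓ A μ' i ≤
      Cstep ℓ A lam ^ 2 * exp (A.mulVec μ' i - A.mulVec μ i) * gradL ℓ A μ i := by
  have hderiv := (CBound.Cconst_of_exists (hℓ _)).iteratedDeriv_le_exp_sub_mul
    (mulVec_le_invFun_of_LL_le hℓ hμ i) (mulVec_le_invFun_of_LL_le hℓ hμ' i) one_le_two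
  rw [iteratedDeriv_one] at hderiv
  rw [gradL, gradL, ← mul_div_assoc]
  exact div_le_div_of_nonneg_right hderiv m.cast_nonneg

theorem abs_sub_half_log_edge_le (hm : 0 < m) (hℓ : ExpComparable ℓ)
    (hv : ∀ i, A.mulVec v i = 1 ∨ A.mulVec v i = -1)
    (hmin : ∀ β : ℝ, LL ℓ A (lam + α • v) ≤ LL ℓ A (lam + β • v)) :
    |α - 1 / 2 * log ((1 + edge ℓ A lam v) / (1 - edge ℓ A lam v))| ≤
      log (Cstep ℓ A lam ^ 2) := by
  have : Nonempty (Fin m) := ⟨⟨0, hm⟩⟩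
  have hdescent : LL ℓ A (lam + α • v) ≤ LL ℓ A lam := by simpa using hmin 0
  rw [edge, gOne_eq_sum hℓ]
  refine abs_sub_half_log_le_of_tilt hv (pow_pos (CBound.Cconst_of_exists (hℓ _)).pos 2)
    (fun i => ?_) (fun i => ?_)
    (sum_gradL_mul_eq_zero_of_forall_LL_le hℓ.differentiable hmin)
    (sum_pos (fun i _ => gradL_pos hℓ i) univ_nonempty)
  · simpa only [mulVec_add_smul_apply, add_sub_cancel_left] using
      gradL_le_exp_sub_mul_gradL hℓ le_rfl hdescent i
  · simpa only [mulVec_add_smul_apply, sub_add_cancel_left] using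
      gradL_le_exp_sub_mul_gradL hℓ hdescent le_rfl i

end Risk

theorem opt_near_ada_binary_general {m n : ℕ} (hm : 0 < m) {A : Matrix (Fin m) (Fin n) ℝ}
    {ℓ : ℝ → ℝ} (hℓ : ExpComparable ℓ) {lam v : Fin n → ℝ}
    (hv : ∀ i, A.mulVec v i = 1 ∨ A.mulVec v i = -1) {αs : ℝ}
    (hmin : ∀ β : ℝ, LL ℓ A (lam + αs • v) ≤ LL ℓ A (lam + β • v)) :
    ((1 / 2) * log ((1 + edge ℓ A lam v) / (1 - edge ℓ A lam v)) -
        (1 / 2) * log (Cstep ℓ A lam ^ 4) ≤ αs ∧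
      αs ≤ (1 / 2) * log ((1 + edge ℓ A lam v) / (1 - edge ℓ A lam v)) +
        (1 / 2) * log (Cstep ℓ A lam ^ 4)) ∧
    ∀ ν : ℝ, 0 ≤ ν →
      |ν * αs - (ν / 2) * log ((1 + edge ℓ A lam v) / (1 - edge ℓ A lam v))| ≤
        (ν / 2) * log (Cstep ℓ A lam ^ 4) := by
  have hstep := abs_sub_half_log_edge_le hm hℓ hv hmin
  have hlog : log (Cstep ℓ A lam ^ 4) = 2 * log (Cstep ℓ A lam ^ 2) := by
    rw [log_pow, log_pow]
    push_cast
    ring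
  rw [hlog]
  refine ⟨by constructor <;> linarith [abs_le.1 hstep], fun ν hν => ?_⟩
  have hscale : ν * αs - (ν / 2) * log ((1 + edge ℓ A lam v) / (1 - edge ℓ A lam v)) =
      ν * (αs - 1 / 2 * log ((1 + edge ℓ A lam v) / (1 - edge ℓ A lam v))) := by ring
  rw [hscale, abs_mul, abs_of_nonneg hν]
  linarith [mul_le_mul_of_nonneg_left hstep hν]

/-- for a binary matrix, the optimal step is within `(1/2)·ln(C⁴)` of
the AdaBoost step `(1/2)·ln((1+γ̂)/(1−γ̂))`; consequently, after shrinkage by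
`ν ∈ (0,1]`, `|ν·α* − (ν/2)·ln((1+γ̂)/(1−γ̂))| ≤ (ν/2)·ln(C⁴)`. -/
theorem opt_near_ada_binary {m n : ℕ} (hm : 0 < m) (hn : 0 < n)
    (A : Matrix (Fin m) (Fin n) ℝ) (hA : ∀ i j, A i j = 1 ∨ A i j = -1)
    (ℓ : ℝ → ℝ) (hℓ : MemL ℓ)
    (lam : Fin n → ℝ) (s : ℝ) (hs : s = 1 ∨ s = -1) (j : Fin n)
    (v : Fin n → ℝ) (hv : v = s • (Pi.single j (1:ℝ) : Fin n → ℝ))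
    (hvgrad : ∑ i, gradL ℓ A lam i * A.mulVec v i = - gInf ℓ A lam)
    (hγ : gammaHat ℓ A lam < 1)
    (αs : ℝ)
    (hmin : ∀ β : ℝ, LL ℓ A (lam + αs • v) ≤ LL ℓ A (lam + β • v)) :
    ((1/2) * Real.log ((1 + gammaHat ℓ A lam) / (1 - gammaHat ℓ A lam)) -
        (1/2) * Real.log ((Cstep ℓ A lam)^4) ≤ αs ∧
      αs ≤ (1/2) * Real.log ((1 + gammaHat ℓ A lam) / (1 - gammaHat ℓ A lam)) +
        (1/2) * Real.log ((Cstep ℓ A lam)^4)) ∧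
    ∀ ν ∈ Set.Ioc (0:ℝ) 1,
      |ν * αs - (ν/2) * Real.log ((1 + gammaHat ℓ A lam) / (1 - gammaHat ℓ A lam))| ≤
        (ν/2) * Real.log ((Cstep ℓ A lam)^4) := by
  rw [← edge_eq_gammaHat hvgrad]
  exact (opt_near_ada_binary_general hm hℓ.2.2.2
    (hv ▸ mulVec_smul_single_eq_one_or_neg_one (hA · j) hs) hmin).imp_right
    fun hshrink ν hν => hshrink ν hν.1.le
end
end
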